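/- arXiv:2401.05100 — 2 statements merged into one kernel-verified Lean document; each statement's English description precedes it below -/
import Mathlib

section
/- Fix constants α > 0, β ≥ 0, ζ > 0, σ > 0, δ > 0 and set κ := 1 + 2αβ, τ := (1 + αβ)^{-1}. Assume f : ℝ^{n_w} → ℝ is differentiable and σ-strongly convex with ∇f(0) = 0; g : ℝ^{n_w} → ℝ^{n_μ} is differentiable with each component g_i convex and g(0) < 0 componentwise; h(w;x) := Cw + Dx with C ∈ ℝ^{n_λ×n_w}, D ∈ ℝ^{n_λ×n}. Let A_c ∈ ℝ^{n×n}, B_c ∈ ℝ^{n×m}, and suppose there is a symmetric matrix H^P_c = [[Q, S], [Sᵀ, R]] with Q = Qᵀ ≺ 0 and R = Rᵀ such that ⟨x, A_c x + B_c u⟩ ≤ [x; u]ᵀ H^P_c [x; u] for all x ∈ ℝ^n, u ∈ ℝ^m. Let E ∈ ℝ^{m×n_w}, W := [[O, I], [E, O]] (so W[w; x] = [x; Ew]), H^C_c := [[−σI − βCᵀC, −βCᵀD], [−βDᵀC, (τ/(4α))DᵀD]], and suppose H_c := H^C_c + δWᵀH^P_cW ≺ 0. Define, for (w, μ, λ,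 x) with μ ≥ 0 componentwise, the Lyapunov derivative V̇ := ⟨w, ẇ⟩ + ⟨μ, μ̇⟩ + ⟨λ, λ̇⟩ + δζ⟨x, A_c x + B_c E w⟩, where ẇ := −ζ(∇f(w) + ∇g(w)μ + τκCᵀ(λ + β(Cw + Dx))), μ̇ := ζ[g(w)]_μ^+, λ̇ := ζτ(−αλ + Cw + Dx). Then V̇ ≤ 0, and V̇ = 0 if and only if (w, μ, λ, x) = (0, 0, 0, 0). -/
/-!
Write `p = C w` and `q = D x`. The choice of `τ` and `κ` makes the terms of `V̇ / ζ` which couple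
`w` and `λ` equal to `-τ α ‖λ + β p - (2 α)⁻¹ q‖² - β ‖p‖² - 2 β ⟪p, q⟫ + τ / (4 α) ‖q‖²`. Strong
monotonicity of `∇f` bounds `-⟪w, ∇f w⟫` by `-σ ‖w‖²`, and convexity of the constraints bounds the
multiplier terms by `∑ i, μ i * g 0 i`. Hence `V̇ / ζ` is at most
`∑ i, μ i * g 0 i - τ α ‖λ + β p - (2 α)⁻¹ q‖² + [w; x]ᵀ H_c [w; x]`, a sum of three nonpositive
terms. The last one vanishes only if `w` and `x` do, the first only if `μ` does, and once
`p = q = 0` the middle one only if `λ` does.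
-/

open Matrix

local notation "⟪" x ", " y "⟫" => @inner ℝ _ _ x y

noncomputable def mv {α β : Type*} [Fintype β] (M : Matrix α β ℝ) (v : EuclideanSpace ℝ β) :
    EuclideanSpace ℝ α := WithLp.toLp 2 (M.mulVec v)

/-- The operator `[a]_b^+`. -/
noncomputable def pplus {p : ℕ} (a b : Fin p → ℝ) : Fin p → ℝ :=
  fun i => if 0 < b i then a i else max 0 (a i)

section Convexity

theorem add_fderiv_apply_sub_le_of_convexOn {V : Type*} [NormedAddCommGroup V] [NormedSpace ℝ V]
    {s : Set V} {F : V → ℝ} {F' : V →L[ℝ] ℝ} {u v : V} (hF : ConvexOn ℝ s F)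
    (hF' : HasFDerivAt F F' v) (hv : v ∈ s) (hu : u ∈ s) :
    F v + F' (u - v) ≤ F u := by
  have hline : ConvexOn ℝ (AffineMap.lineMap (k := ℝ) v u ⁻¹' s)
      (F ∘ AffineMap.lineMap (k := ℝ) v u) :=
    hF.comp_affineMap _
  have hderiv : HasDerivAt (F ∘ AffineMap.lineMap (k := ℝ) v u) (F' (u - v)) 0 :=
    HasFDerivAt.comp_hasDerivAt 0 (by simpa using hF') AffineMap.hasDerivAt_lineMap
  have hslope := hline.le_slope_of_hasDerivAt (by simpa using hv) (by simpa using hu)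
    zero_lt_one hderiv
  simp only [slope_def_field, Function.comp_apply, AffineMap.lineMap_apply_zero,
    AffineMap.lineMap_apply_one, sub_zero, div_one] at hslope
  linarith

variable {V : Type*} [NormedAddCommGroup V] [InnerProductSpace ℝ V] [CompleteSpace V]

theorem add_inner_gradient_sub_le_of_convexOn {s : Set V} {F : V → ℝ} {G u v : V}
    (hF : ConvexOn ℝ s F) (hG : HasGradientAt F G v) (hv : v ∈ s) (hu : u ∈ s) :
    F v + ⟪G, u - v⟫ ≤ F u :=
  add_fderiv_apply_sub_le_of_convexOn hF hG.hasFDerivAt hv hu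

theorem hasGradientAt_sub_mul_norm_sq {F : V → ℝ} {G v : V} (σ : ℝ) (hG : HasGradientAt F G v) :
    HasGradientAt (fun u ↦ F u - σ / 2 * ‖u‖ ^ 2) (G - σ • v) v := by
  have hsq := (hasStrictFDerivAt_norm_sq v).hasFDerivAt.const_mul (σ / 2)
  rw [hasGradientAt_iff_hasFDerivAt]
  refine (hG.hasFDerivAt.sub hsq).congr_fderiv ?_
  ext y
  simp only [_root_.sub_apply, _root_.smul_apply,
    InnerProductSpace.toDual_apply_apply, innerSL_apply_apply, inner_sub_left,
    real_inner_smul_left, smul_eq_mul, nsmul_eq_mul, Nat.cast_ofNat]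
  ring

theorem mul_norm_sub_sq_le_inner_gradient_sub_of_strongConvexOn {s : Set V} {F : V → ℝ} {σ : ℝ}
    {G H u v : V} (hF : StrongConvexOn s σ F) (hG : HasGradientAt F G u)
    (hH : HasGradientAt F H v) (hu : u ∈ s) (hv : v ∈ s) :
    σ * ‖u - v‖ ^ 2 ≤ ⟪G - H, u - v⟫ := by
  have hconv := strongConvexOn_iff_convex.1 hF
  have hle_v := add_inner_gradient_sub_le_of_convexOn hconv
    (hasGradientAt_sub_mul_norm_sq σ hG) hu hv
  have hle_u := add_inner_gradient_sub_le_of_convexOn hconv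
    (hasGradientAt_sub_mul_norm_sq σ hH) hv hu
  rw [← neg_sub u v, inner_neg_right] at hle_v
  have hmono : 0 ≤ ⟪(G - σ • u) - (H - σ • v), u - v⟫ := by
    rw [inner_sub_left]
    linarith
  have hsplit : (G - σ • u) - (H - σ • v) = (G - H) - σ • (u - v) := by module
  rw [hsplit, inner_sub_left, real_inner_smul_left, real_inner_self_eq_norm_sq] at hmono
  linarith

end Convexity

section Multipliers

theorem inner_toLp_pplus {k : ℕ} {μ : EuclideanSpace ℝ (Fin k)} (a : Fin k → ℝ)
    (hμ : ∀ i, 0 ≤ μ i) :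
    ⟪μ, WithLp.toLp 2 (pplus a μ)⟫ = ∑ i, μ i * a i := by
  rw [PiLp.inner_apply]
  refine Finset.sum_congr rfl fun i _ ↦ ?_
  rcases (hμ i).lt_or_eq with hpos | hzero
  · simp [pplus, hpos, mul_comm]
  · simp [← hzero]

theorem sum_mul_sub_inner_sum_smul_le {V ι : Type*} [NormedAddCommGroup V]
    [InnerProductSpace ℝ V] [CompleteSpace V] [Fintype ι] {s : Set V} {g : V → ι → ℝ}
    {g' : ι → V} {μ : ι → ℝ} {u v : V} (hg : ∀ i, ConvexOn ℝ s fun y ↦ g y i)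
    (hg' : ∀ i, HasGradientAt (fun y ↦ g y i) (g' i) v) (hμ : ∀ i, 0 ≤ μ i)
    (hv : v ∈ s) (hu : u ∈ s) :
    ∑ i, μ i * g v i - ⟪v - u, ∑ i, μ i • g' i⟫ ≤ ∑ i, μ i * g u i := by
  simp only [inner_sum, real_inner_smul_right, ← Finset.sum_sub_distrib, ← mul_sub]
  refine Finset.sum_le_sum fun i _ ↦ mul_le_mul_of_nonneg_left ?_ (hμ i)
  have hle := add_inner_gradient_sub_le_of_convexOn (hg i) (hg' i) hv hu
  rwa [← neg_sub v u, inner_neg_right, real_inner_comm, ← sub_eq_add_neg] at hle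

end Multipliers

section Lyapunov

variable {𝓦 𝓧 𝓛 : Type*} [NormedAddCommGroup 𝓦] [InnerProductSpace ℝ 𝓦]
  [NormedAddCommGroup 𝓧] [InnerProductSpace ℝ 𝓧] [NormedAddCommGroup 𝓛] [InnerProductSpace ℝ 𝓛]

/-- The Lyapunov derivative `V̇` of the closed loop at the state `(w, μ, lam, x)`. Here `C'` plays
the role of the adjoint of `C`, and `v w x` is the velocity of the plant, which is
`A_c x + B_c E w` for a linear one. -/
noncomputable def lyapunovRate {k : ℕ} (α β ζ δ κ τ : ℝ) (f' : 𝓦 → 𝓦) (g : 𝓦 → Fin k → ℝ)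
    (g' : 𝓦 → Fin k → 𝓦) (C : 𝓦 → 𝓛) (C' : 𝓛 → 𝓦) (D : 𝓧 → 𝓛) (v : 𝓦 → 𝓧 → 𝓧)
    (w : 𝓦) (μ : EuclideanSpace ℝ (Fin k)) (lam : 𝓛) (x : 𝓧) : ℝ :=
  ⟪w, (-ζ) • (f' w + ∑ i, μ i • g' w i + (τ * κ) • C' (lam + β • (C w + D x)))⟫ +
    ⟪μ, ζ • WithLp.toLp 2 (pplus (g w) μ)⟫ +
    ⟪lam, (ζ * τ) • ((-α) • lam + C w + D x)⟫ + δ * ζ * ⟪x, v w x⟫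

/-- What is left of `V̇ / ζ` when the multipliers `μ` and `λ` have been eliminated. The plant enters
through its own supply `⟪x, v w x⟫`; replacing this by the upper bound `[x; E w]ᵀ H^P_c [x; E w]`
gives the quadratic form of `H_c`. -/
noncomputable def closedLoopForm (α β σ δ τ : ℝ) (C : 𝓦 → 𝓛) (D : 𝓧 → 𝓛) (v : 𝓦 → 𝓧 → 𝓧)
    (w : 𝓦) (x : 𝓧) : ℝ :=
  -(σ * ‖w‖ ^ 2) - β * ‖C w‖ ^ 2 - 2 * β * ⟪C w, D x⟫ + τ / (4 * α) * ‖D x‖ ^ 2 + δ * ⟪x, v w x⟫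

theorem coupling_eq_neg_sq_add {α β κ τ : ℝ} (hκ : κ = 1 + 2 * α * β) (hτ : τ = (1 + α * β)⁻¹)
    (hα : α ≠ 0) (hαβ : 1 + α * β ≠ 0) (p q z : 𝓛) :
    -(τ * κ * ⟪p, z + β • (p + q)⟫) + τ * ⟪z, (-α) • z + p + q⟫ =
      -(τ * α * ‖z + β • p - (2 * α)⁻¹ • q‖ ^ 2) +
        (-(β * ‖p‖ ^ 2) - 2 * β * ⟪p, q⟫ + τ / (4 * α) * ‖q‖ ^ 2) := by
  simp only [← real_inner_self_eq_norm_sq, inner_add_left, inner_add_right, inner_sub_left,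
    inner_sub_right, real_inner_smul_left, real_inner_smul_right]
  rw [real_inner_comm p q, real_inner_comm p z, real_inner_comm q z, hκ, hτ]
  field_simp
  ring

variable [CompleteSpace 𝓦] {k : ℕ} {α β ζ σ δ κ τ : ℝ} {f : 𝓦 → ℝ} {f' : 𝓦 → 𝓦}
  {g : 𝓦 → Fin k → ℝ} {g' : 𝓦 → Fin k → 𝓦} {C' : 𝓛 → 𝓦}

theorem lyapunovRate_le {C : 𝓦 → 𝓛} {D : 𝓧 → 𝓛} {v : 𝓦 → 𝓧 → 𝓧} (hζ : 0 ≤ ζ) (hα : α ≠ 0)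
    (hαβ : 1 + α * β ≠ 0) (hκ : κ = 1 + 2 * α * β) (hτ : τ = (1 + α * β)⁻¹)
    (hf : StrongConvexOn Set.univ σ f) (hf' : ∀ w, HasGradientAt f (f' w) w) (hf0 : f' 0 = 0)
    (hg : ∀ i, ConvexOn ℝ Set.univ fun w ↦ g w i)
    (hg' : ∀ w i, HasGradientAt (fun u ↦ g u i) (g' w i) w) (hC : ∀ w l, ⟪w, C' l⟫ = ⟪C w, l⟫)
    (w : 𝓦) {μ : EuclideanSpace ℝ (Fin k)} (hμ : ∀ i, 0 ≤ μ i) (lam : 𝓛) (x : 𝓧) :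
    lyapunovRate α β ζ δ κ τ f' g g' C C' D v w μ lam x ≤
      ζ * (∑ i, μ i * g 0 i - τ * α * ‖lam + β • C w - (2 * α)⁻¹ • D x‖ ^ 2 +
        closedLoopForm α β σ δ τ C D v w x) := by
  have hobjective : σ * ‖w‖ ^ 2 ≤ ⟪w, f' w⟫ := by
    simpa [hf0, real_inner_comm] using mul_norm_sub_sq_le_inner_gradient_sub_of_strongConvexOn hf
      (hf' w) (hf' 0) (Set.mem_univ w) (Set.mem_univ 0)
  have hconstraints : ∑ i, μ i * g w i - ⟪w, ∑ i, μ i • g' w i⟫ ≤ ∑ i, μ i * g 0 i := by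
    simpa using sum_mul_sub_inner_sum_smul_le hg (hg' w) hμ (Set.mem_univ w) (Set.mem_univ 0)
  have hcoupling := coupling_eq_neg_sq_add hκ hτ hα hαβ (C w) (D x) lam
  calc lyapunovRate α β ζ δ κ τ f' g g' C C' D v w μ lam x
    _ = ζ * (-⟪w, f' w⟫ + (∑ i, μ i * g w i - ⟪w, ∑ i, μ i • g' w i⟫) +
          (-(τ * κ * ⟪C w, lam + β • (C w + D x)⟫) + τ * ⟪lam, (-α) • lam + C w + D x⟫) +
          δ * ⟪x, v w x⟫) := by
      rw [lyapunovRate, real_inner_smul_right, inner_add_right, inner_add_right,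
        real_inner_smul_right, hC, real_inner_smul_right μ, inner_toLp_pplus _ hμ,
        real_inner_smul_right lam]
      ring
    _ ≤ _ := by
      rw [hcoupling, closedLoopForm]
      exact mul_le_mul_of_nonneg_left (by linarith) hζ

theorem iMPC_closed_loop_Lyapunov_decrease_general {C : 𝓦 →ₗ[ℝ] 𝓛} {D : 𝓧 →ₗ[ℝ] 𝓛}
    {v : 𝓦 → 𝓧 → 𝓧} (hζ : 0 < ζ) (hτα : 0 < τ * α) (hκ : κ = 1 + 2 * α * β)
    (hτ : τ = (1 + α * β)⁻¹) (hf : StrongConvexOn Set.univ σ f)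
    (hf' : ∀ w, HasGradientAt f (f' w) w) (hf0 : f' 0 = 0)
    (hg : ∀ i, ConvexOn ℝ Set.univ fun w ↦ g w i)
    (hg' : ∀ w i, HasGradientAt (fun u ↦ g u i) (g' w i) w) (hg0 : ∀ i, g 0 i < 0)
    (hC : ∀ w l, ⟪w, C' l⟫ = ⟪C w, l⟫)
    (hform : ∀ w x, (w, x) ≠ 0 → closedLoopForm α β σ δ τ C D v w x < 0)
    (w : 𝓦) (μ : EuclideanSpace ℝ (Fin k)) (lam : 𝓛) (x : 𝓧) (hμ : ∀ i, 0 ≤ μ i) :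
    lyapunovRate α β ζ δ κ τ f' g g' C C' D v w μ lam x ≤ 0 ∧
      (lyapunovRate α β ζ δ κ τ f' g g' C C' D v w μ lam x = 0 ↔
        w = 0 ∧ μ = 0 ∧ lam = 0 ∧ x = 0) := by
  have hα : α ≠ 0 := right_ne_zero_of_mul hτα.ne'
  have hαβ : 1 + α * β ≠ 0 := fun h ↦ left_ne_zero_of_mul hτα.ne' (by simp [hτ, h])
  have hle := lyapunovRate_le (δ := δ) (D := D) (v := v) hζ.le hα hαβ hκ hτ hf hf' hf0 hg hg' hC
    w hμ lam x
  have hterm : ∀ i ∈ Finset.univ, μ i * g 0 i ≤ 0 := fun i _ ↦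
    mul_nonpos_of_nonneg_of_nonpos (hμ i) (hg0 i).le
  have hsum : ∑ i, μ i * g 0 i ≤ 0 := Finset.sum_nonpos hterm
  have hsq : 0 ≤ τ * α * ‖lam + β • C w - (2 * α)⁻¹ • D x‖ ^ 2 := by positivity
  have hform_nonpos : closedLoopForm α β σ δ τ C D v w x ≤ 0 := by
    by_cases h : (w, x) = 0
    · obtain ⟨rfl, rfl⟩ := Prod.mk_eq_zero.1 h
      simp [closedLoopForm]
    · exact (hform w x h).le
  refine ⟨hle.trans (mul_nonpos_of_nonneg_of_nonpos hζ.le (by linarith)), fun hzero ↦ ?_, ?_⟩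
  · have htotal := nonneg_of_mul_nonneg_right (hzero ▸ hle) hζ
    obtain ⟨rfl, rfl⟩ : w = 0 ∧ x = 0 := by
      rw [← Prod.mk_eq_zero]
      by_contra h
      linarith [hform w x h]
    have hsum0 : ∑ i, μ i * g 0 i = 0 := by linarith
    have hsq0 : τ * α * ‖lam + β • C 0 - (2 * α)⁻¹ • D 0‖ ^ 2 = 0 := by linarith
    refine ⟨rfl, ?_, by simpa [hτα.ne'] using hsq0, rfl⟩
    ext i
    simpa [(hg0 i).ne] using (Finset.sum_eq_zero_iff_of_nonpos hterm).1 hsum0 i (Finset.mem_univ i)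
  · rintro ⟨rfl, rfl, rfl, rfl⟩
    simp [lyapunovRate]

end Lyapunov

section MatrixForm

variable {ι₁ ι₂ ι₃ ι₄ : Type*} [Fintype ι₁] [Fintype ι₂] [Fintype ι₃] [Fintype ι₄]

theorem dotProduct_transpose_mul_mulVec {R : Type*} [CommSemiring R] (M : Matrix ι₁ ι₂ R)
    (N : Matrix ι₁ ι₃ R) (x : ι₂ → R) (y : ι₃ → R) :
    x ⬝ᵥ (Mᵀ * N) *ᵥ y = M *ᵥ x ⬝ᵥ N *ᵥ y := by
  rw [← mulVec_mulVec, dotProduct_mulVec, vecMul_transpose]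

theorem inner_mv_mv (M : Matrix ι₁ ι₂ ℝ) (N : Matrix ι₁ ι₃ ℝ) (x : EuclideanSpace ℝ ι₂)
    (y : EuclideanSpace ℝ ι₃) : ⟪mv M x, mv N y⟫ = x ⬝ᵥ (Mᵀ * N) *ᵥ y := by
  rw [dotProduct_transpose_mul_mulVec, dotProduct_comm]
  rfl

theorem inner_mv_transpose (M : Matrix ι₁ ι₂ ℝ) (x : EuclideanSpace ℝ ι₂)
    (y : EuclideanSpace ℝ ι₁) : ⟪x, mv Mᵀ y⟫ = ⟪mv M x, y⟫ := by
  simp only [mv, EuclideanSpace.inner_eq_star_dotProduct, star_trivial]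
  rw [dotProduct_comm, dotProduct_transpose_mulVec]

/-- The matrix `W`, which sends `[w; x]` to the state and input `[x; E w]` of the plant. -/
def plantSelector {ι₁ ι₃ : Type*} (ι₂ : Type*) [DecidableEq ι₂] (E : Matrix ι₃ ι₁ ℝ) :
    Matrix (ι₂ ⊕ ι₃) (ι₁ ⊕ ι₂) ℝ :=
  fromBlocks 0 1 E 0

theorem plantSelector_mulVec_sumElim {ι₁ ι₂ ι₃ : Type*} [Fintype ι₁] [Fintype ι₂] [DecidableEq ι₂]
    (E : Matrix ι₃ ι₁ ℝ) (w : EuclideanSpace ℝ ι₁) (x : EuclideanSpace ℝ ι₂) :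
    plantSelector ι₂ E *ᵥ Sum.elim w x = Sum.elim x (mv E w) := by
  simp [plantSelector, fromBlocks_mulVec, mv, Function.comp_def]

variable [DecidableEq ι₁] [DecidableEq ι₂]

/-- The matrix `H_c`, for an arbitrary matrix `P` in place of `H^P_c`. -/
noncomputable def closedLoopMatrix (α β σ δ τ : ℝ) (C : Matrix ι₄ ι₁ ℝ) (D : Matrix ι₄ ι₂ ℝ)
    (E : Matrix ι₃ ι₁ ℝ) (P : Matrix (ι₂ ⊕ ι₃) (ι₂ ⊕ ι₃) ℝ) : Matrix (ι₁ ⊕ ι₂) (ι₁ ⊕ ι₂) ℝ :=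
  fromBlocks (-(σ • (1 : Matrix ι₁ ι₁ ℝ)) - β • (Cᵀ * C)) (-(β • (Cᵀ * D))) (-(β • (Dᵀ * C)))
      ((τ / (4 * α)) • (Dᵀ * D)) +
    δ • ((plantSelector ι₂ E)ᵀ * P * plantSelector ι₂ E)

variable (α β σ τ : ℝ) (C : Matrix ι₄ ι₁ ℝ) (D : Matrix ι₄ ι₂ ℝ) (E : Matrix ι₃ ι₁ ℝ)
  (P : Matrix (ι₂ ⊕ ι₃) (ι₂ ⊕ ι₃) ℝ)

theorem dotProduct_closedLoopMatrix_mulVec (δ : ℝ) (w : EuclideanSpace ℝ ι₁)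
    (x : EuclideanSpace ℝ ι₂) :
    Sum.elim w x ⬝ᵥ closedLoopMatrix α β σ δ τ C D E P *ᵥ Sum.elim w x =
      -(σ * ‖w‖ ^ 2) - β * ‖mv C w‖ ^ 2 - 2 * β * ⟪mv C w, mv D x⟫ +
        τ / (4 * α) * ‖mv D x‖ ^ 2 +
        δ * (Sum.elim x (mv E w) ⬝ᵥ P *ᵥ Sum.elim x (mv E w)) := by
  have hself : w.ofLp ⬝ᵥ w.ofLp = ‖w‖ ^ 2 := by
    rw [← real_inner_self_eq_norm_sq]
    rfl
  rw [closedLoopMatrix, add_mulVec, dotProduct_add, smul_mulVec, dotProduct_smul, Matrix.mul_assoc,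
    dotProduct_transpose_mul_mulVec, ← mulVec_mulVec, plantSelector_mulVec_sumElim,
    fromBlocks_mulVec]
  simp only [Sum.elim_comp_inl, Sum.elim_comp_inr, sumElim_dotProduct_sumElim, dotProduct_add,
    sub_mulVec, neg_mulVec, smul_mulVec, one_mulVec, dotProduct_sub, dotProduct_neg,
    dotProduct_smul, ← inner_mv_mv, hself, real_inner_self_eq_norm_sq, smul_eq_mul,
    real_inner_comm (mv C w) (mv D x)]
  ring

variable {α β σ τ C D E P}

theorem closedLoopForm_neg_of_posDef {δ : ℝ}
    {a : EuclideanSpace ℝ ι₂ → EuclideanSpace ℝ ι₃ → EuclideanSpace ℝ ι₂} (hδ : 0 ≤ δ)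
    (ha : ∀ x u, ⟪x, a x u⟫ ≤ Sum.elim x u ⬝ᵥ P *ᵥ Sum.elim x u)
    (hH : (-closedLoopMatrix α β σ δ τ C D E P).PosDef) (w : EuclideanSpace ℝ ι₁)
    (x : EuclideanSpace ℝ ι₂) (hwx : (w, x) ≠ 0) :
    closedLoopForm α β σ δ τ (mv C) (mv D) (fun w x ↦ a x (mv E w)) w x < 0 := by
  have hne : Sum.elim w.ofLp x.ofLp ≠ 0 := fun h ↦ hwx <| Prod.mk_eq_zero.2
    ⟨by ext i; exact congrFun h (Sum.inl i), by ext i; exact congrFun h (Sum.inr i)⟩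
  have hpos := hH.dotProduct_mulVec_pos hne
  rw [star_trivial, neg_mulVec, dotProduct_neg, dotProduct_closedLoopMatrix_mulVec] at hpos
  have hsupply := mul_le_mul_of_nonneg_left (ha x (mv E w)) hδ
  rw [closedLoopForm]
  linarith

end MatrixForm

/-- under QSR-dissipativity of the plant and `H_c ≺ 0`, the Lyapunov derivative
`V̇` of the continuous-time closed loop satisfies `V̇ ≤ 0`, with `V̇ = 0` iff
`(w, μ, λ, x) = (0, 0, 0, 0)`. -/
theorem iMPC_closed_loop_Lyapunov_decrease
    (nw n m nμ nl : ℕ) (α β ζ σ δ κ τ : ℝ)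
    (hα : 0 < α) (hβ : 0 ≤ β) (hζ : 0 < ζ) (hσ : 0 < σ) (hδ : 0 < δ)
    (hκ : κ = 1 + 2 * α * β) (hτ : τ = (1 + α * β)⁻¹)
    (f : EuclideanSpace ℝ (Fin nw) → ℝ)
    (f' : EuclideanSpace ℝ (Fin nw) → EuclideanSpace ℝ (Fin nw))
    (hfdiff : ∀ v, HasGradientAt f (f' v) v)
    (hfsc : ConvexOn ℝ Set.univ (fun v => f v - σ / 2 * ‖v‖ ^ 2))
    (hf0 : f' 0 = 0)
    (g : EuclideanSpace ℝ (Fin nw) → Fin nμ → ℝ)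
    (g' : EuclideanSpace ℝ (Fin nw) → Fin nμ → EuclideanSpace ℝ (Fin nw))
    (hgdiff : ∀ v i, HasGradientAt (fun u => g u i) (g' v i) v)
    (hgconv : ∀ i, ConvexOn ℝ Set.univ fun v => g v i)
    (hg0 : ∀ i, g 0 i < 0)
    (C : Matrix (Fin nl) (Fin nw) ℝ) (D : Matrix (Fin nl) (Fin n) ℝ)
    (Ac : Matrix (Fin n) (Fin n) ℝ) (Bc : Matrix (Fin n) (Fin m) ℝ)
    (Q : Matrix (Fin n) (Fin n) ℝ) (S : Matrix (Fin n) (Fin m) ℝ)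
    (R : Matrix (Fin m) (Fin m) ℝ)
    (hQsym : Q.IsSymm) (hQneg : (-Q).PosDef) (hRsym : R.IsSymm)
    (hplant : ∀ (x : EuclideanSpace ℝ (Fin n)) (u : EuclideanSpace ℝ (Fin m)),
      ⟪x, mv Ac x + mv Bc u⟫ ≤
        Sum.elim x u ⬝ᵥ (Matrix.fromBlocks Q S Sᵀ R).mulVec (Sum.elim x u))
    (E : Matrix (Fin m) (Fin nw) ℝ)
    (W : Matrix (Fin n ⊕ Fin m) (Fin nw ⊕ Fin n) ℝ)
    (hW : W = Matrix.fromBlocks 0 1 E 0)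
    (HCc : Matrix (Fin nw ⊕ Fin n) (Fin nw ⊕ Fin n) ℝ)
    (hHCc : HCc = Matrix.fromBlocks
      (-(σ • (1 : Matrix (Fin nw) (Fin nw) ℝ)) - β • (Cᵀ * C))
      (-(β • (Cᵀ * D))) (-(β • (Dᵀ * C))) ((τ / (4 * α)) • (Dᵀ * D)))
    (hHc : (-(HCc + δ • (Wᵀ * Matrix.fromBlocks Q S Sᵀ R * W))).PosDef) :
    ∀ (w : EuclideanSpace ℝ (Fin nw)) (μ : EuclideanSpace ℝ (Fin nμ))
      (lam : EuclideanSpace ℝ (Fin nl)) (x : EuclideanSpace ℝ (Fin n)),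
      (∀ i, 0 ≤ μ i) →
      let wdot : EuclideanSpace ℝ (Fin nw) :=
        (-ζ) • (f' w + (∑ i, μ i • g' w i) +
          (τ * κ) • mv Cᵀ (lam + β • (mv C w + mv D x)));
      let μdot : EuclideanSpace ℝ (Fin nμ) := ζ • (WithLp.toLp 2 (pplus (g w) μ) : EuclideanSpace ℝ (Fin nμ));
      let lamdot : EuclideanSpace ℝ (Fin nl) := (ζ * τ) • ((-α) • lam + mv C w + mv D x);
      let Vdot : ℝ := ⟪w, wdot⟫ + ⟪μ, μdot⟫ + ⟪lam, lamdot⟫ +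
        δ * ζ * ⟪x, mv Ac x + mv Bc (mv E w)⟫;
      Vdot ≤ 0 ∧ (Vdot = 0 ↔ w = 0 ∧ μ = 0 ∧ lam = 0 ∧ x = 0) := by
  subst hW hHCc
  have hτα : 0 < τ * α := by rw [hτ]; positivity
  have hform := closedLoopForm_neg_of_posDef hδ.le hplant hHc
  exact iMPC_closed_loop_Lyapunov_decrease_general (C := toEuclideanLin C)
    (D := toEuclideanLin D) hζ hτα hκ hτ (strongConvexOn_iff_convex.2 hfsc) hfdiff hf0 hgconv
    hgdiff hg0 (inner_mv_transpose C) hform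
end

section
/- Let ζ > 0, Δt > 0, γ ∈ (0, 1], g : ℝ^{n_w} → ℝ^{n_μ}, w ∈ ℝ^{n_w}, and μ ∈ ℝ^{n_μ} with μ ≥ 0 componentwise. Let η̄ be the step-size base vector and η := γη̄. Then for every index i: η_i ≥ 0, with η_i > 0 whenever μ_i > 0; and the dual update preserves nonnegativity: μ_i + ζΔt η_i ([g(w)]_μ^+)_i ≥ 0. -/
open Matrix

local notation "⟪" x ", " y "⟫" => @inner ℝ _ _ x y

/-- The step-size base vector `η̄`. -/
noncomputable def etaBar {p : ℕ} (c : ℝ) (gw μ : Fin p → ℝ) : Fin p → ℝ :=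
  fun i => if 0 ≤ μ i + c * pplus gw μ i then 1 else -(μ i) / (c * pplus gw μ i)

section EtaBar

variable {n : ℕ} (c : ℝ) (gw : Fin n → ℝ) {μ : Fin n → ℝ} {i : Fin n}

theorem etaBar_nonneg (hμ : 0 ≤ μ i) : 0 ≤ etaBar c gw μ i := by
  unfold etaBar
  split_ifs with hfull
  · exact zero_le_one
  · have hneg : c * pplus gw μ i < 0 := by linarith
    exact div_nonneg_of_nonpos (neg_nonpos.mpr hμ) hneg.le

theorem etaBar_pos (hμ : 0 < μ i) : 0 < etaBar c gw μ i := by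
  unfold etaBar
  split_ifs with hfull
  · exact zero_lt_one
  · have hneg : c * pplus gw μ i < 0 := by linarith
    exact div_pos_of_neg_of_neg (neg_neg_of_pos hμ) hneg

theorem add_etaBar_mul_pplus_nonneg (hμ : 0 ≤ μ i) :
    0 ≤ μ i + etaBar c gw μ i * (c * pplus gw μ i) := by
  unfold etaBar
  split_ifs with hfull
  · rwa [one_mul]
  · have hneg : c * pplus gw μ i < 0 := by linarith
    -- The truncated step ends exactly on the boundary of the half-line.
    rw [div_mul_cancel₀ _ hneg.ne, add_neg_cancel]

theorem add_damped_etaBar_mul_pplus_nonneg {γ : ℝ} (hγ : γ ∈ Set.Icc (0 : ℝ) 1) (hμ : 0 ≤ μ i) :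
    0 ≤ μ i + c * (γ * etaBar c gw μ i) * pplus gw μ i := by
  -- The damped update lies on the segment from `μ i` to the undamped one, and `[0, ∞)` is convex.
  have hdamped : μ i + γ • (etaBar c gw μ i * (c * pplus gw μ i)) ∈ Set.Ici 0 :=
    (convex_Ici (𝕜 := ℝ) 0).add_smul_mem hμ (add_etaBar_mul_pplus_nonneg c gw hμ) hγ
  calc
    0 ≤ μ i + γ • (etaBar c gw μ i * (c * pplus gw μ i)) := hdamped
    _ = μ i + c * (γ * etaBar c gw μ i) * pplus gw μ i := by rw [smul_eq_mul]; ring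

theorem step_size_nonneg_and_dual_update_nonneg_general {γ : ℝ} (hγ0 : 0 < γ) (hγ1 : γ ≤ 1)
    (hμ : 0 ≤ μ i) :
    0 ≤ γ * etaBar c gw μ i ∧
      (0 < μ i → 0 < γ * etaBar c gw μ i) ∧
      0 ≤ μ i + c * (γ * etaBar c gw μ i) * pplus gw μ i :=
  ⟨mul_nonneg hγ0.le (etaBar_nonneg c gw hμ),
    fun hμ_pos => mul_pos hγ0 (etaBar_pos c gw hμ_pos),
    add_damped_etaBar_mul_pplus_nonneg c gw ⟨hγ0.le, hγ1⟩ hμ⟩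

end EtaBar

/-- the step size `η = γη̄` is nonnegative, positive where `μ_i > 0`, and the
dual update preserves nonnegativity: `μ_i + ζΔt η_i ([g(w)]_μ^+)_i ≥ 0`. -/
theorem step_size_nonneg_and_dual_update_nonneg
    (nw nμ : ℕ) (ζ Δt γ : ℝ) (hζ : 0 < ζ) (hΔt : 0 < Δt) (hγ0 : 0 < γ) (hγ1 : γ ≤ 1)
    (g : EuclideanSpace ℝ (Fin nw) → Fin nμ → ℝ)
    (w : EuclideanSpace ℝ (Fin nw)) (μ : EuclideanSpace ℝ (Fin nμ)) (hμ : ∀ i, 0 ≤ μ i) :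
    ∀ i, 0 ≤ γ * etaBar (ζ * Δt) (g w) μ i ∧
      (0 < μ i → 0 < γ * etaBar (ζ * Δt) (g w) μ i) ∧
      0 ≤ μ i + ζ * Δt * (γ * etaBar (ζ * Δt) (g w) μ i) * pplus (g w) μ i :=
  fun i => step_size_nonneg_and_dual_update_nonneg_general (ζ * Δt) (g w) hγ0 hγ1 (hμ i)
end
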